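/- arXiv:2003.10683 — 2 statements merged into one kernel-verified Lean document; each statement's English description precedes it below -/
import Mathlib

section
/- Let k be a perfect field and let X be a reduced scheme of finite type over k. Then X admits a locally closed stratification with finitely many strata each of which is smooth over k: there exist finitely many pairwise disjoint locally closed subschemes X₁, …, Xₙ of X, each smooth over k, such that every point of X lies in exactly one Xᵢ. -/
open AlgebraicGeometry CategoryTheory

universe u

/-!
Over a perfect field, the smooth locus of a reduced scheme locally of finite type is open and
dense, so every nonempty closed subset of `X`, given its reduced structure, contains a nonempty
smooth open subscheme. Take it as a stratum, and treat its complement in the closed subset by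
Noetherian induction.
-/

section FiniteStratification

open TopologicalSpace

variable {X Y : Scheme.{u}}

/-- A finite stratification of the subset `s` of the `Y`-scheme `f : X ⟶ Y` into locally closed
subschemes whose structure morphisms to `Y` satisfy `P`. The strata are encoded as immersions into
`X`, and the closure of a stratum need not be a union of strata. -/
def HasFiniteStratification (P : MorphismProperty Scheme.{u}) (f : X ⟶ Y) (s : Set X) : Prop :=
  ∃ (n : ℕ) (Z : Fin n → Scheme.{u}) (g : ∀ i, Z i ⟶ X),
    (∀ i, IsImmersion (g i)) ∧
    (∀ i, P (g i ≫ f)) ∧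
    (∀ i j, i ≠ j → Disjoint (Set.range (g i)) (Set.range (g j))) ∧
    (⋃ i, Set.range (g i)) = s

lemma isReduced_subscheme_of_isRadical {I : X.IdealSheafData}
    (hI : ∀ U : X.affineOpens, (I.ideal U).IsRadical) : IsReduced I.subscheme := by
  refine (IsReduced.iff_of_openCover _ I.subschemeCover.openCover).mpr fun (U : X.affineOpens) ↦ ?_
  have : _root_.IsReduced (Γ(X, U) ⧸ I.ideal U) :=
    (Ideal.isRadical_iff_quotient_reduced _).mp (hI U)
  exact inferInstanceAs (IsReduced (Spec (.of (Γ(X, U) ⧸ I.ideal U))))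

lemma exists_isReduced_isClosedImmersion_range_eq (T : Closeds X) :
    ∃ (Z : Scheme.{u}) (i : Z ⟶ X), IsReduced Z ∧ IsClosedImmersion i ∧ Set.range i = T :=
  have hI := Scheme.IdealSheafData.coe_support_vanishingIdeal T
  ⟨_, (Scheme.IdealSheafData.vanishingIdeal T).subschemeι,
    isReduced_subscheme_of_isRadical fun _ ↦ PrimeSpectrum.isRadical_vanishingIdeal _,
    inferInstance, (Scheme.IdealSheafData.range_subschemeι _).trans hI⟩

lemma smooth_smoothLocus_ι_comp (f : X ⟶ Y) [LocallyOfFinitePresentation f] :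
    Smooth (f.smoothLocus.ι ≫ f) := by
  rw [← Scheme.Hom.smoothLocus_eq_top_iff, ← Scheme.Hom.preimage_smoothLocus_eq]
  exact f.smoothLocus.ι_preimage_self

lemma isNoetherian_of_locallyOfFiniteType_of_quasiCompact (f : X ⟶ Y) [LocallyOfFiniteType f]
    [QuasiCompact f] [IsNoetherian Y] : IsNoetherian X where
  toIsLocallyNoetherian := LocallyOfFiniteType.isLocallyNoetherian f
  toCompactSpace := QuasiCompact.compactSpace_of_compactSpace f

namespace HasFiniteStratification

variable {P : MorphismProperty Scheme.{u}} {f : X ⟶ Y} {s : Set X}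

lemma empty : HasFiniteStratification P f ∅ :=
  ⟨0, Fin.elim0, fun i ↦ i.elim0, fun i ↦ i.elim0, fun i ↦ i.elim0, fun i ↦ i.elim0, by simp⟩

lemma range_union {W : Scheme.{u}} (w : W ⟶ X) [hw : IsImmersion w] (hwP : P (w ≫ f))
    (hs : HasFiniteStratification P f s) (hws : Disjoint (Set.range w) s) :
    HasFiniteStratification P f (Set.range w ∪ s) := by
  obtain ⟨n, Z, g, hg, hgP, hdisj, rfl⟩ := hs
  rw [Set.disjoint_iUnion_right] at hws
  refine ⟨n + 1, Fin.cons W Z, Fin.cons w g, Fin.cases hw hg, Fin.cases hwP hgP,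
    Fin.cases (Fin.cases (absurd rfl) fun j _ ↦ hws j) fun i ↦
      Fin.cases (fun _ ↦ (hws i).symm) fun j hij ↦ hdisj i j (mt (congrArg Fin.succ) hij), ?_⟩
  ext x
  simp only [Set.mem_iUnion, Fin.exists_fin_succ, Set.mem_union]
  rfl

theorem of_forall_exists_opens [NoetherianSpace X]
    (h : ∀ ⦃Z : Scheme.{u}⦄ (i : Z ⟶ X) [IsReduced Z] [IsClosedImmersion i] [Nonempty Z],
      ∃ U : Z.Opens, (U : Set Z).Nonempty ∧ P (U.ι ≫ i ≫ f)) (T : Closeds X) :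
    HasFiniteStratification P f T := by
  induction T using WellFoundedLT.induction with
  | ind T ih =>
    obtain rfl | hT := eq_or_ne T ⊥
    · exact empty
    obtain ⟨Z, i, _, _, hi⟩ := exists_isReduced_isClosedImmersion_range_eq T
    have : Nonempty Z := by
      rwa [← Set.range_nonempty_iff_nonempty, hi, Closeds.coe_nonempty]
    obtain ⟨U, hU, hUP⟩ := h i
    have hinj : Function.Injective i := i.isClosedEmbedding.injective
    let T' : Closeds X :=
      ⟨i '' (U : Set Z)ᶜ, i.isClosedEmbedding.isClosedMap _ U.isOpen.isClosed_compl⟩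
    have hT' : T' < T := by
      change i '' (U : Set Z)ᶜ ⊂ T
      rw [← hi, ← Set.image_univ]
      exact hinj.image_strictMono (Set.compl_ssubset_univ.mpr hU)
    have hrange : Set.range (U.ι ≫ i) = i '' U := by
      rw [Scheme.Hom.comp_base, TopCat.coe_comp, Set.range_comp, U.range_ι]
    have hdisj : Disjoint (Set.range (U.ι ≫ i)) T' := by
      rw [hrange]
      exact (Set.disjoint_image_iff hinj).mpr disjoint_compl_right
    have hunion : Set.range (U.ι ≫ i) ∪ T' = T := by
      rw [hrange, ← hi, ← Set.image_univ, ← Set.union_compl_self (U : Set Z), Set.image_union]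
      rfl
    rw [← hunion]
    exact (ih T' hT').range_union (U.ι ≫ i) (by rwa [Category.assoc]) hdisj

end HasFiniteStratification

end FiniteStratification

theorem exists_finite_smooth_stratification_general (k : Type u) [Field k] [PerfectField k]
    (X : Scheme.{u}) (f : X ⟶ Spec (CommRingCat.of k)) [LocallyOfFiniteType f] [QuasiCompact f] :
    HasFiniteStratification @Smooth f Set.univ := by
  have : IsNoetherian X := isNoetherian_of_locallyOfFiniteType_of_quasiCompact f
  refine HasFiniteStratification.of_forall_exists_opens (fun Z i _ _ _ ↦ ?_) ⊤
  have : LocallyOfFinitePresentation (i ≫ f) :=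
    LocallyOfFinitePresentation.iff_locallyOfFiniteType.mpr inferInstance
  exact ⟨(i ≫ f).smoothLocus, (i ≫ f).dense_smoothLocus_of_perfectField.nonempty,
    smooth_smoothLocus_ι_comp (i ≫ f)⟩

/-- Let `k` be a perfect field and `X` a reduced scheme of finite type over
`k` (the structure morphism `f` is locally of finite type and quasi-compact). Then `X` admits
a finite stratification by locally closed subschemes, each smooth over `k`: there are finitely
many locally closed immersions `gᵢ : Zᵢ ⟶ X` with `Zᵢ` smooth over `k`, whose set-theoretic
images are pairwise disjoint and cover `X` (so every point of `X` lies in exactly one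
stratum). -/
theorem exists_finite_smooth_stratification (k : Type u) [Field k] [PerfectField k]
    (X : Scheme.{u}) (f : X ⟶ Spec (CommRingCat.of k))
    [IsReduced X] [LocallyOfFiniteType f] [QuasiCompact f] :
    ∃ (n : ℕ) (Z : Fin n → Scheme.{u}) (g : ∀ i, Z i ⟶ X),
      (∀ i, IsImmersion (g i)) ∧
      (∀ i, IsSmooth (g i ≫ f)) ∧
      (∀ i j, i ≠ j → Disjoint (Set.range (g i).base) (Set.range (g j).base)) ∧
      (⋃ i, Set.range (g i).base) = Set.univ :=
  exists_finite_smooth_stratification_general k X f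
end

section
/- Let k be a perfect field. Let K₀(Var_k) be the abelian group generated by isomorphism classes {X} of k-schemes X of finite type, modulo the relations {X} = {Y} + {X ∖ Y} for every closed subscheme Y of X, and let K′₀(Var_k) be the abelian group generated by isomorphism classes {X} of smooth k-schemes of finite type, modulo the relations {X} = {Y} + {X ∖ Y} for every closed embedding of smooth k-schemes Y ↪ X. Then the canonical group homomorphism K′₀(Var_k) → K₀(Var_k), sending the class of a smooth finite-type k-scheme to its class, is an isomorphism. -/
open AlgebraicGeometry CategoryTheory

universe u

variable (k : Type u) [Field k]

/-- A scheme of finite type over `k`: a scheme together with a structure morphism to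
`Spec k` which is locally of finite type and quasi-compact. -/
structure FTScheme where
  X : Scheme.{u}
  p : X ⟶ Spec (CommRingCat.of k)
  lft : LocallyOfFiniteType p
  qc : QuasiCompact p

/-- A smooth scheme of finite type over `k`. -/
structure SmFTScheme extends FTScheme k where
  smooth : IsSmooth p

/-- The relators defining `K₀(Var_k)`: for every two isomorphic finite type `k`-schemes
`A ≅ B` (over `k`) the element `{A} - {B}`, and for every finite type `k`-scheme `W` with a
closed subscheme `Y ↪ W` (over `k`) with open complement `U` the element `{W} - {Y} - {U}`. -/
def varRelators : Set (FreeAbelianGroup (FTScheme k)) :=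
  {r | (∃ A B : FTScheme k, (∃ e : A.X ≅ B.X, e.hom ≫ B.p = A.p) ∧
          r = FreeAbelianGroup.of A - FreeAbelianGroup.of B) ∨
       (∃ (W Y U : FTScheme k) (i : Y.X ⟶ W.X) (j : U.X ⟶ W.X),
          IsClosedImmersion i ∧ IsOpenImmersion j ∧ i ≫ W.p = Y.p ∧ j ≫ W.p = U.p ∧
          Set.range j.base = (Set.range i.base)ᶜ ∧
          r = FreeAbelianGroup.of W - FreeAbelianGroup.of Y - FreeAbelianGroup.of U)}

/-- `K₀(Var_k)`: the free abelian group on finite type `k`-schemes modulo isomorphism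
and the scissor relations. -/
abbrev K0Var := FreeAbelianGroup (FTScheme k) ⧸ AddSubgroup.closure (varRelators k)

/-- The class `{A}` of a finite type `k`-scheme in `K₀(Var_k)`. -/
def clsVar (A : FTScheme k) : K0Var k :=
  QuotientAddGroup.mk (FreeAbelianGroup.of A)

/-- The relators defining `K′₀(Var_k)`: for every two isomorphic smooth finite type
`k`-schemes `A ≅ B` (over `k`) the element `{A} - {B}`, and for every closed immersion
`Y ↪ W` of smooth finite type `k`-schemes (over `k`) with open complement `U` (a smooth
finite type `k`-scheme) the element `{W} - {Y} - {U}`. -/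
def smVarRelators : Set (FreeAbelianGroup (SmFTScheme k)) :=
  {r | (∃ A B : SmFTScheme k, (∃ e : A.X ≅ B.X, e.hom ≫ B.p = A.p) ∧
          r = FreeAbelianGroup.of A - FreeAbelianGroup.of B) ∨
       (∃ (W Y U : SmFTScheme k) (i : Y.X ⟶ W.X) (j : U.X ⟶ W.X),
          IsClosedImmersion i ∧ IsOpenImmersion j ∧ i ≫ W.p = Y.p ∧ j ≫ W.p = U.p ∧
          Set.range j.base = (Set.range i.base)ᶜ ∧
          r = FreeAbelianGroup.of W - FreeAbelianGroup.of Y - FreeAbelianGroup.of U)}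

/-- `K′₀(Var_k)`: the free abelian group on smooth finite type `k`-schemes modulo
isomorphism and the scissor relations for closed immersions of smooth schemes. -/
abbrev K0VarSm := FreeAbelianGroup (SmFTScheme k) ⧸ AddSubgroup.closure (smVarRelators k)

/-- The class `{A}` of a smooth finite type `k`-scheme in `K′₀(Var_k)`. -/
def clsSm (A : SmFTScheme k) : K0VarSm k :=
  QuotientAddGroup.mk (FreeAbelianGroup.of A)

/-!
Stratify a scheme of finite type by smooth locally closed pieces, each one closed in what is left
after removing the previous ones. Over a perfect field such stratifications exist by Noetherian
induction, because the smooth locus of a nonempty reduced scheme is nonempty. The sum of the classes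
of the strata in `K′₀(Var_k)` does not depend on the stratification: on a smooth scheme every
such stratification has sum the class of the scheme, since the open remainders stay smooth, and an
arbitrary stratification can be compared with a closed-open decomposition by restratifying the
pieces of each stratum. Sending a scheme to this sum inverts `K′₀(Var_k) → K₀(Var_k)`.
-/

section SchemeDecompositions

open Limits

/-- The situation of a scissor relation: a closed immersion `i : Z ⟶ X` and an open immersion
`j : U ⟶ X` onto the complement of the image of `i`. The scheme structure on `Z` is arbitrary. -/
structure IsScissorPair {X Z U : Scheme.{u}} (i : Z ⟶ X) (j : U ⟶ X) : Prop where
  isClosedImmersion : IsClosedImmersion i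
  isOpenImmersion : IsOpenImmersion j
  range_eq_compl : Set.range j = (Set.range i)ᶜ

lemma range_hom_comp {X Y Z : Scheme.{u}} (f : X ⟶ Y) (g : Y ⟶ Z) :
    Set.range (f ≫ g) = g '' Set.range f := by
  rw [← Set.range_comp, Scheme.Hom.comp_base, TopCat.coe_comp]

variable {X Z U : Scheme.{u}} {i : Z ⟶ X} {j : U ⟶ X}

lemma IsScissorPair.pullback_fst (h : IsScissorPair i j) {W : Scheme.{u}} (f : W ⟶ X) :
    IsScissorPair (pullback.fst f i) (pullback.fst f j) := by
  obtain ⟨_, _, hr⟩ := h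
  refine ⟨inferInstance, inferInstance, ?_⟩
  rw [Scheme.Pullback.range_fst, Scheme.Pullback.range_fst, hr, Set.preimage_compl]

lemma IsScissorPair.pullback_snd (h : IsScissorPair i j) {W : Scheme.{u}} (f : W ⟶ X) :
    IsScissorPair (pullback.snd i f) (pullback.snd j f) := by
  obtain ⟨_, _, hr⟩ := h
  refine ⟨inferInstance, inferInstance, ?_⟩
  rw [Scheme.Pullback.range_snd, Scheme.Pullback.range_snd, hr, Set.preimage_compl]

lemma exists_isScissorPair_of_isClosedImmersion (i : Z ⟶ X) [IsClosedImmersion i] :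
    ∃ V : X.Opens, IsScissorPair i V.ι :=
  ⟨⟨(Set.range i)ᶜ, i.isClosedEmbedding.isClosed_range.isOpen_compl⟩, inferInstance,
    inferInstance, Scheme.Opens.range_ι _⟩

lemma exists_isScissorPair_of_opens (V : X.Opens) :
    ∃ (C : Scheme.{u}) (i : C ⟶ X), IsScissorPair i V.ι := by
  let C : TopologicalSpace.Closeds X := ⟨(V : Set X)ᶜ, V.isOpen.isClosed_compl⟩
  refine ⟨_, (Scheme.IdealSheafData.vanishingIdeal C).subschemeι, inferInstance, inferInstance, ?_⟩
  rw [Scheme.IdealSheafData.range_subschemeι, Scheme.Opens.range_ι]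
  exact (compl_compl _).symm

lemma isScissorPair_of_surjective (i : Z ⟶ X) [IsClosedImmersion i] [Surjective i] [IsEmpty U]
    (j : U ⟶ X) : IsScissorPair i j :=
  ⟨inferInstance, inferInstance, by rw [i.surjective.range_eq, Set.compl_univ, Set.range_eq_empty]⟩

lemma IsScissorPair.of_comp_isOpenImmersion (h : IsScissorPair i j) {V T W : Scheme.{u}}
    (v : V ⟶ X) [IsOpenImmersion v] {i' : T ⟶ V} {j' : W ⟶ V}
    [IsPreimmersion (i' ≫ v)] [IsOpenImmersion (j' ≫ v)]
    (hi : Set.range (i' ≫ v) = Set.range i ∩ Set.range v)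
    (hj : Set.range (j' ≫ v) = Set.range j ∩ Set.range v) : IsScissorPair i' j' := by
  obtain ⟨_, _, hr⟩ := h
  have range_eq_preimage {Y : Scheme.{u}} (f : Y ⟶ V) {s : Set X}
      (hf : Set.range (f ≫ v) = s ∩ Set.range v) : Set.range f = v ⁻¹' s := by
    rw [← Set.preimage_image_eq (Set.range f) v.isOpenEmbedding.injective, ← range_hom_comp, hf,
      Set.preimage_inter_range]
  have hi' := range_eq_preimage i' hi
  have : IsPreimmersion i' := .of_comp i' v
  refine ⟨.of_isPreimmersion i' ?_, .of_comp j' v, ?_⟩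
  · exact hi' ▸ i.isClosedEmbedding.isClosed_range.preimage v.continuous
  · rw [hi', range_eq_preimage j' hj, hr, Set.preimage_compl]

lemma IsScissorPair.not_surjective (h : IsScissorPair i j) [Nonempty U] : ¬ Surjective i := by
  intro _
  have := h.range_eq_compl ▸ Set.range_nonempty j
  rw [i.surjective.range_eq, Set.compl_univ] at this
  exact Set.not_nonempty_empty this

/-- For closed subschemes `S ⊆ Z ⊆ X`: the complement `V` of `S` in `X` contains `T = Z ∖ S` as a
closed subscheme, with complement `U = X ∖ Z`. -/
lemma IsScissorPair.exists_comp {S T : Scheme.{u}} {s : S ⟶ Z} {t : T ⟶ Z}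
    (hX : IsScissorPair i j) (hZ : IsScissorPair s t) :
    ∃ (V : X.Opens) (i' : T ⟶ V) (j' : U ⟶ V), IsScissorPair (s ≫ i) V.ι ∧
      IsScissorPair i' j' ∧ i' ≫ V.ι = t ≫ i ∧ j' ≫ V.ι = j := by
  have ⟨_, _, hj⟩ := hX
  obtain ⟨_, _, ht⟩ := hZ
  obtain ⟨V, hV⟩ := exists_isScissorPair_of_isClosedImmersion (s ≫ i)
  have range_V : Set.range V.ι = (i '' Set.range s)ᶜ := by
    rw [hV.range_eq_compl, range_hom_comp]
  have range_t : Set.range (t ≫ i) = Set.range i ∩ Set.range V.ι := by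
    rw [range_hom_comp, ht, range_V, Set.image_compl_eq_range_sdiff_image
      i.isClosedEmbedding.injective, Set.sdiff_eq]
  have range_j : Set.range j ⊆ Set.range V.ι := by
    rw [hj, range_V]
    exact Set.compl_subset_compl.mpr (Set.image_subset_range _ _)
  let i' := IsOpenImmersion.lift V.ι (t ≫ i) (range_t ▸ Set.inter_subset_right)
  let j' := IsOpenImmersion.lift V.ι j range_j
  have hi' : i' ≫ V.ι = t ≫ i := IsOpenImmersion.lift_fac ..
  have hj' : j' ≫ V.ι = j := IsOpenImmersion.lift_fac ..
  have : IsPreimmersion (i' ≫ V.ι) := hi' ▸ inferInstance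
  have : IsOpenImmersion (j' ≫ V.ι) := hj' ▸ inferInstance
  refine ⟨V, i', j', hV, hX.of_comp_isOpenImmersion V.ι ?_ ?_, hi', hj'⟩
  · rw [hi', range_t]
  · rw [hj', Set.inter_eq_left.mpr range_j]

end SchemeDecompositions

theorem closedImmersion_induction {X : Scheme.{u}} [TopologicalSpace.NoetherianSpace X]
    {P : ∀ {Z : Scheme.{u}}, (Z ⟶ X) → Prop}
    (step : ∀ {Z : Scheme.{u}} (i : Z ⟶ X) [IsClosedImmersion i],
      (∀ {Z' : Scheme.{u}} (i' : Z' ⟶ Z) [IsClosedImmersion i'], ¬ Surjective i' → P (i' ≫ i)) →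
      P i)
    {Z : Scheme.{u}} (i : Z ⟶ X) [IsClosedImmersion i] : P i := by
  induction hC : (⟨Set.range i, i.isClosedEmbedding.isClosed_range⟩ : TopologicalSpace.Closeds X)
    using WellFoundedLT.induction generalizing Z with
  | ind C ih =>
    subst hC
    refine step i fun i' _ hi' ↦ ih _ (SetLike.coe_ssubset_coe.mp ?_) (i' ≫ i) rfl
    change Set.range (i' ≫ i) ⊂ Set.range i
    rw [range_hom_comp, ← Set.image_univ (f := i)]
    refine i.isClosedEmbedding.injective.image_strictMono (Set.ssubset_univ_iff.mpr fun h ↦ ?_)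
    exact hi' ⟨Set.range_eq_univ.mp h⟩

instance isReduced_subscheme_nilradical (X : Scheme.{u}) : IsReduced X.nilradical.subscheme := by
  refine @IsReduced.of_openCover _ X.nilradical.subschemeCover.openCover fun V ↦ ?_
  change IsReduced (Spec (.of (Γ(X, V.1) ⧸ X.nilradical.ideal V)))
  rw [affine_isReduced_iff]
  exact (Ideal.isRadical_iff_quotient_reduced _).mp (Ideal.radical_isRadical _)

instance surjective_subschemeι_nilradical (X : Scheme.{u}) : Surjective X.nilradical.subschemeι :=
  ⟨Set.range_eq_univ.mp <| X.nilradical.range_subschemeι.trans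
    (congrArg _ X.support_nilradical)⟩

section Classes

variable {k}

/-- The class in `K′₀(Var_k)` of a smooth quasi-compact structure morphism. -/
def smoothClass {X : Scheme.{u}} (p : X ⟶ Spec (.of k)) [Smooth p] [QuasiCompact p] :
    K0VarSm k :=
  clsSm k ⟨⟨X, p, inferInstance, inferInstance⟩, ‹Smooth p›⟩

/-- The class in `K₀(Var_k)` of a structure morphism of finite type. -/
def finiteTypeClass {X : Scheme.{u}} (p : X ⟶ Spec (.of k)) [LocallyOfFiniteType p]
    [QuasiCompact p] : K0Var k :=
  clsVar k ⟨X, p, inferInstance, inferInstance⟩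

instance quasiCompact_openImmersion_comp {X Y U : Scheme.{u}} [IsLocallyNoetherian Y] (j : U ⟶ X)
    [IsOpenImmersion j] (p : X ⟶ Y) [LocallyOfFiniteType p] [QuasiCompact p] :
    QuasiCompact (j ≫ p) :=
  have := LocallyOfFiniteType.isLocallyNoetherian p
  inferInstance

variable {X Z U : Scheme.{u}} {i : Z ⟶ X} {j : U ⟶ X} (p : X ⟶ Spec (.of k))

lemma smoothClass_eq_add (h : IsScissorPair i j) [Smooth p] [QuasiCompact p] [Smooth (i ≫ p)]
    [QuasiCompact (i ≫ p)] [Smooth (j ≫ p)] [QuasiCompact (j ≫ p)] :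
    smoothClass p = smoothClass (i ≫ p) + smoothClass (j ≫ p) := by
  rw [← sub_eq_zero, ← sub_sub]
  exact (QuotientAddGroup.eq_zero_iff _).mpr <| AddSubgroup.subset_closure <|
    .inr ⟨_, _, _, i, j, h.1, h.2, rfl, rfl, h.3, rfl⟩

lemma finiteTypeClass_eq_add (h : IsScissorPair i j) [LocallyOfFiniteType p] [QuasiCompact p]
    [LocallyOfFiniteType (i ≫ p)] [QuasiCompact (i ≫ p)] [LocallyOfFiniteType (j ≫ p)]
    [QuasiCompact (j ≫ p)] :
    finiteTypeClass p = finiteTypeClass (i ≫ p) + finiteTypeClass (j ≫ p) := by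
  rw [← sub_eq_zero, ← sub_sub]
  exact (QuotientAddGroup.eq_zero_iff _).mpr <| AddSubgroup.subset_closure <|
    .inr ⟨_, _, _, i, j, h.1, h.2, rfl, rfl, h.3, rfl⟩

lemma smoothClass_of_isEmpty [IsEmpty X] [Smooth p] [QuasiCompact p] : smoothClass p = 0 := by
  simpa using smoothClass_eq_add p (isScissorPair_of_surjective (𝟙 X) (𝟙 X))

lemma finiteTypeClass_of_isEmpty [IsEmpty X] [LocallyOfFiniteType p] [QuasiCompact p] :
    finiteTypeClass p = 0 := by
  simpa using finiteTypeClass_eq_add p (isScissorPair_of_surjective (𝟙 X) (𝟙 X))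

end Classes

section Stratifications

open Limits

variable {k}

/-- `HasStratifiedClass p a` says that the `k`-scheme with structure morphism `p` admits a finite
smooth stratification the sum of whose strata in `K′₀(Var_k)` is `a`. The strata are listed
so that each one is closed in the union of itself and the later ones. -/
inductive HasStratifiedClass : ∀ {X : Scheme.{u}}, (X ⟶ Spec (.of k)) → K0VarSm k → Prop
  | empty {X : Scheme.{u}} [IsEmpty X] (p : X ⟶ Spec (.of k)) : HasStratifiedClass p 0
  | cons {X S U : Scheme.{u}} {p : X ⟶ Spec (.of k)} {s : S ⟶ X} {u : U ⟶ X} {a : K0VarSm k}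
      [Smooth (s ≫ p)] [QuasiCompact (s ≫ p)] (h : IsScissorPair s u)
      (hU : HasStratifiedClass (u ≫ p) a) : HasStratifiedClass p (smoothClass (s ≫ p) + a)

namespace HasStratifiedClass

variable {X Z U : Scheme.{u}} {i : Z ⟶ X} {j : U ⟶ X} {p : X ⟶ Spec (.of k)} {a b : K0VarSm k}

lemma add (h : IsScissorPair i j) (hZ : HasStratifiedClass (i ≫ p) a)
    (hU : HasStratifiedClass (j ≫ p) b) : HasStratifiedClass p (a + b) := by
  generalize hq : i ≫ p = q at hZ
  induction hZ generalizing X U with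
  | empty q =>
    subst hq
    simpa [smoothClass_of_isEmpty] using cons h hU
  | @cons Z S T q s t a _ _ hst _ ih =>
    subst hq
    obtain ⟨V, i', j', hV, hV', hi', hj'⟩ := h.exists_comp hst
    have hVab : HasStratifiedClass (V.ι ≫ p) (a + b) :=
      ih hV' (by rwa [reassoc_of% hj']) (by rw [reassoc_of% hi'])
    have : Smooth ((s ≫ i) ≫ p) := by rwa [Category.assoc]
    have : QuasiCompact ((s ≫ i) ≫ p) := by rwa [Category.assoc]
    have hs : smoothClass (s ≫ i ≫ p) = smoothClass ((s ≫ i) ≫ p) := by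
      simp only [Category.assoc]
    rw [add_assoc, hs]
    exact cons hV hVab

lemma of_surjective (i : Z ⟶ X) [IsClosedImmersion i] [Surjective i]
    (hZ : HasStratifiedClass (i ≫ p) a) : HasStratifiedClass p a := by
  simpa using hZ.add (isScissorPair_of_surjective i (Scheme.emptyTo X)) (.empty _)

lemma of_smooth (p : X ⟶ Spec (.of k)) [Smooth p] [QuasiCompact p] :
    HasStratifiedClass p (smoothClass p) := by
  simpa using cons (p := p) (isScissorPair_of_surjective (𝟙 X) (Scheme.emptyTo X)) (.empty _)

lemma eq_smoothClass (h : HasStratifiedClass p a) [hp : Smooth p] [hqc : QuasiCompact p] :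
    a = smoothClass p := by
  induction h generalizing hp hqc with
  | empty p => rw [smoothClass_of_isEmpty]
  | @cons X S U p s u a _ _ hsu _ ih =>
    have := hsu.isOpenImmersion
    rw [smoothClass_eq_add p hsu, ih]

lemma eq_zero_of_isEmpty [IsEmpty X] (h : HasStratifiedClass p a) : a = 0 :=
  h.eq_smoothClass.trans (smoothClass_of_isEmpty p)

end HasStratifiedClass

variable {X Z U : Scheme.{u}} {i : Z ⟶ X} {j : U ⟶ X}

lemma exists_nonempty_opens_smooth [PerfectField k] [IsReduced X] [Nonempty X]
    (p : X ⟶ Spec (.of k)) [LocallyOfFiniteType p] :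
    ∃ V : X.Opens, Nonempty V ∧ Smooth (V.ι ≫ p) := by
  have := LocallyOfFinitePresentation.iff_locallyOfFiniteType.mpr ‹LocallyOfFiniteType p›
  refine ⟨p.smoothLocus, p.dense_smoothLocus_of_perfectField.nonempty.to_subtype, ?_⟩
  rw [← Scheme.Hom.smoothLocus_eq_top_iff, ← Scheme.Hom.preimage_smoothLocus_eq]
  exact Scheme.Opens.ι_preimage_self _

theorem exists_hasStratifiedClass [PerfectField k] (p : X ⟶ Spec (.of k)) [LocallyOfFiniteType p]
    [QuasiCompact p] : ∃ a, HasStratifiedClass p a := by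
  have := LocallyOfFiniteType.isLocallyNoetherian p
  have := (quasiCompact_iff_compactSpace p).mp ‹_›
  have : IsNoetherian X := {}
  suffices ∃ a, HasStratifiedClass (𝟙 X ≫ p) a by simpa using this
  refine closedImmersion_induction (P := fun i ↦ ∃ a, HasStratifiedClass (i ≫ p) a)
    (fun {Z} i _ ih ↦ ?_) (𝟙 X)
  obtain _ | _ := isEmpty_or_nonempty Z
  · exact ⟨0, .empty _⟩
  let r := Z.nilradical.subschemeι
  have : Nonempty Z.nilradical.subscheme := r.surjective.nonempty
  obtain ⟨V, _, _⟩ := exists_nonempty_opens_smooth (r ≫ i ≫ p)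
  obtain ⟨C, c, hc⟩ := exists_isScissorPair_of_opens V
  have := hc.isClosedImmersion
  have hcr : ¬ Surjective (c ≫ r) := fun h ↦ hc.not_surjective
    ⟨Function.Surjective.of_comp_left (f := r) h.surj r.isClosedEmbedding.injective⟩
  obtain ⟨a, ha⟩ := ih (c ≫ r) hcr
  rw [Category.assoc] at ha
  exact ⟨a + smoothClass _, .of_surjective r (.add hc ha (.of_smooth _))⟩

namespace HasStratifiedClass

variable {p : X ⟶ Spec (.of k)} {a b : K0VarSm k}

lemma exists_eq_add [PerfectField k] (hp : HasStratifiedClass p a) [hft : LocallyOfFiniteType p]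
    [hqc : QuasiCompact p] (h : IsScissorPair i j) :
    ∃ b c, HasStratifiedClass (i ≫ p) b ∧ HasStratifiedClass (j ≫ p) c ∧ a = b + c := by
  induction hp generalizing hft hqc Z U with
  | empty p =>
    have := Function.isEmpty i
    have := Function.isEmpty j
    exact ⟨0, 0, .empty _, .empty _, (add_zero 0).symm⟩
  | @cons X S T p s t a _ _ hst _ ih =>
    have ⟨_, _, _⟩ := hst
    have ⟨_, _, _⟩ := h
    obtain ⟨b, c, hb, hc, rfl⟩ := ih (h.pullback_fst t)
    obtain ⟨b', hb'⟩ := exists_hasStratifiedClass (pullback.fst s i ≫ s ≫ p)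
    obtain ⟨c', hc'⟩ := exists_hasStratifiedClass (pullback.fst s j ≫ s ≫ p)
    have hs : b' + c' = smoothClass (s ≫ p) := (add (h.pullback_fst s) hb' hc').eq_smoothClass
    rw [pullback.condition_assoc] at hb hc hb' hc'
    exact ⟨b' + b, c' + c, add (hst.pullback_snd i) hb' hb, add (hst.pullback_snd j) hc' hc,
      by rw [← hs, add_add_add_comm]⟩

theorem unique [PerfectField k] (ha : HasStratifiedClass p a) (hb : HasStratifiedClass p b)
    [hft : LocallyOfFiniteType p] [hqc : QuasiCompact p] : a = b := by
  induction hb generalizing a hft hqc with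
  | empty p => exact ha.eq_zero_of_isEmpty
  | @cons X S T p s t b _ _ hst _ ih =>
    have := hst.isOpenImmersion
    obtain ⟨c, d, hc, hd, rfl⟩ := ha.exists_eq_add hst
    rw [hc.eq_smoothClass, ih hd]

end HasStratifiedClass

end Stratifications

section InverseHomomorphisms

variable {k}

variable (k) in
lemma closure_smVarRelators_le_comap : AddSubgroup.closure (smVarRelators k) ≤
    (AddSubgroup.closure (varRelators k)).comap (FreeAbelianGroup.map SmFTScheme.toFTScheme) := by
  rw [AddSubgroup.closure_le]
  rintro _ (⟨A, B, h, rfl⟩ | ⟨W, Y, U, i, j, hi, hj, hY, hU, hr, rfl⟩) <;>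
  refine AddSubgroup.subset_closure ?_ <;> simp only [map_sub, FreeAbelianGroup.map_of_apply]
  · exact .inl ⟨_, _, h, rfl⟩
  · exact .inr ⟨_, _, _, i, j, hi, hj, hY, hU, hr, rfl⟩

variable (k) in
/-- The canonical homomorphism `K′₀(Var_k) → K₀(Var_k)`. -/
def K0VarSm.toK0Var : K0VarSm k →+ K0Var k :=
  QuotientAddGroup.map _ _ (FreeAbelianGroup.map SmFTScheme.toFTScheme)
    (closure_smVarRelators_le_comap k)

variable (k) in
lemma K0VarSm.toK0Var_clsSm (A : SmFTScheme k) :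
    toK0Var k (clsSm k A) = clsVar k A.toFTScheme :=
  congrArg _ (FreeAbelianGroup.map_of_apply A)

lemma HasStratifiedClass.toK0Var_eq {X : Scheme.{u}} {p : X ⟶ Spec (.of k)} {a : K0VarSm k}
    (h : HasStratifiedClass p a) [hft : LocallyOfFiniteType p] [hqc : QuasiCompact p] :
    K0VarSm.toK0Var k a = finiteTypeClass p := by
  induction h generalizing hft hqc with
  | empty p => rw [map_zero, finiteTypeClass_of_isEmpty]
  | @cons X S T p s t a _ _ hst _ ih =>
    have := hst.isOpenImmersion
    rw [map_add, ih, finiteTypeClass_eq_add p hst]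
    exact congrArg (· + _) (K0VarSm.toK0Var_clsSm k _)

attribute [instance] FTScheme.lft FTScheme.qc

instance SmFTScheme.smooth_p (A : SmFTScheme k) : Smooth A.p :=
  A.smooth

/-- The class in `K′₀(Var_k)` of an arbitrary scheme of finite type over a perfect field: the sum of
the classes of the strata of any smooth stratification. -/
noncomputable def stratifiedClass [PerfectField k] (A : FTScheme k) : K0VarSm k :=
  (exists_hasStratifiedClass A.p).choose

lemma hasStratifiedClass_stratifiedClass [PerfectField k] (A : FTScheme k) :
    HasStratifiedClass A.p (stratifiedClass A) :=
  (exists_hasStratifiedClass A.p).choose_spec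

lemma HasStratifiedClass.eq_stratifiedClass [PerfectField k] {A : FTScheme k} {a : K0VarSm k}
    (h : HasStratifiedClass A.p a) : a = stratifiedClass A :=
  h.unique (hasStratifiedClass_stratifiedClass A)

lemma stratifiedClass_eq_clsSm [PerfectField k] (A : SmFTScheme k) :
    stratifiedClass A.toFTScheme = clsSm k A :=
  (hasStratifiedClass_stratifiedClass _).eq_smoothClass

lemma stratifiedClass_eq_of_iso [PerfectField k] {A B : FTScheme k} (e : A.X ≅ B.X)
    (he : e.hom ≫ B.p = A.p) : stratifiedClass A = stratifiedClass B :=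
  (HasStratifiedClass.of_surjective e.hom
    (he ▸ hasStratifiedClass_stratifiedClass A)).eq_stratifiedClass

lemma stratifiedClass_eq_add [PerfectField k] {W Y U : FTScheme k} {i : Y.X ⟶ W.X} {j : U.X ⟶ W.X}
    (h : IsScissorPair i j) (hi : i ≫ W.p = Y.p) (hj : j ≫ W.p = U.p) :
    stratifiedClass W = stratifiedClass Y + stratifiedClass U :=
  (HasStratifiedClass.add h (hi ▸ hasStratifiedClass_stratifiedClass Y)
    (hj ▸ hasStratifiedClass_stratifiedClass U)).eq_stratifiedClass.symm

variable (k) in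
lemma closure_varRelators_le_ker [PerfectField k] :
    AddSubgroup.closure (varRelators k) ≤ (FreeAbelianGroup.lift stratifiedClass).ker := by
  rw [AddSubgroup.closure_le]
  rintro _ (⟨A, B, ⟨e, he⟩, rfl⟩ | ⟨W, Y, U, i, j, hi, hj, hY, hU, hr, rfl⟩)
  · simp [AddMonoidHom.mem_ker, stratifiedClass_eq_of_iso e he]
  · simp [AddMonoidHom.mem_ker, stratifiedClass_eq_add ⟨hi, hj, hr⟩ hY hU]

variable (k) in
/-- The homomorphism `K₀(Var_k) → K′₀(Var_k)` which sums the classes of the strata of a smooth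
stratification. -/
noncomputable def K0Var.toK0VarSm [PerfectField k] : K0Var k →+ K0VarSm k :=
  QuotientAddGroup.lift _ (FreeAbelianGroup.lift stratifiedClass) (closure_varRelators_le_ker k)

lemma K0Var.toK0VarSm_clsVar [PerfectField k] (A : FTScheme k) :
    toK0VarSm k (clsVar k A) = stratifiedClass A :=
  FreeAbelianGroup.lift_apply_of _ A

lemma K0VarSm.toK0VarSm_comp_toK0Var [PerfectField k] :
    (K0Var.toK0VarSm k).comp (K0VarSm.toK0Var k) = .id _ := by
  ext A
  change K0Var.toK0VarSm k (toK0Var k (clsSm k A)) = clsSm k A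
  rw [toK0Var_clsSm, K0Var.toK0VarSm_clsVar, stratifiedClass_eq_clsSm]

lemma K0Var.toK0Var_comp_toK0VarSm [PerfectField k] :
    (K0VarSm.toK0Var k).comp (K0Var.toK0VarSm k) = .id _ := by
  ext A
  change K0VarSm.toK0Var k (toK0VarSm k (clsVar k A)) = clsVar k A
  rw [toK0VarSm_clsVar, (hasStratifiedClass_stratifiedClass A).toK0Var_eq, finiteTypeClass]

end InverseHomomorphisms

/-- Let `k` be a perfect field. The canonical group homomorphism
`K′₀(Var_k) → K₀(Var_k)`, sending the class of a smooth finite type `k`-scheme to its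
class, is an isomorphism. -/
theorem K0VarSm_to_K0Var_bijective [PerfectField k] :
    ∃ φ : K0VarSm k →+ K0Var k,
      (∀ A : SmFTScheme k, φ (clsSm k A) = clsVar k A.toFTScheme) ∧
      Function.Bijective φ := by
  refine ⟨K0VarSm.toK0Var k, K0VarSm.toK0Var_clsSm k, Function.bijective_iff_has_inverse.mpr
    ⟨K0Var.toK0VarSm k, ?left_inverse, ?right_inverse⟩⟩
  case left_inverse => exact DFunLike.congr_fun K0VarSm.toK0VarSm_comp_toK0Var
  case right_inverse => exact DFunLike.congr_fun K0Var.toK0Var_comp_toK0VarSm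
end
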